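/- arXiv:1806.03625 — 3 statements merged into one kernel-verified Lean document; each statement's English description precedes it below -/
import Mathlib

section
/- Let t ≥ 3 be an integer and let M be a matroid admitting a cyclic (t−1,t)-ordering e_1, e_2, …, e_n with n ≥ 6t−10. Then n is even, and for every index i there is exactly one t-element circuit of M containing X_i = {e_i, e_{i+1}, …, e_{i+t−2}} and exactly one t-element cocircuit of M containing X_i. -/
open Set

namespace CyclicArr

variable {α : Type*}

/-- `C` is a circuit of the matroid `M`: a minimal dependent set. -/
def Cct (M : Matroid α) (C : Set α) : Prop := Minimal M.Dep C

/-- The set of `len` consecutive elements `{e_i, e_{i+1}, …, e_{i+len-1}}`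
in a cyclic ordering `e`, subscripts mod `n`. -/
def seg {n : ℕ} (e : ZMod n → α) (i : ℤ) (len : ℕ) : Set α :=
  (fun k : ℕ => e ((i + k : ℤ) : ZMod n)) '' Set.Iio len

/-- `e` is a cyclic ordering of (the ground set of) `M`. -/
def CyclicOrd {n : ℕ} (M : Matroid α) (e : ZMod n → α) : Prop :=
  Function.Injective e ∧ Set.range e = M.E

/-- `e` is a cyclic `(t-1, t)`-ordering of `M`: every `t-1` consecutive elements
are contained in a `t`-element circuit and a `t`-element cocircuit. -/
def CyclicPropOrd {n : ℕ} (M : Matroid α) (t : ℕ) (e : ZMod n → α) : Prop :=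
  CyclicOrd M e ∧
  ∀ i : ℤ, (∃ C, Cct M C ∧ C.ncard = t ∧ seg e i (t-1) ⊆ C) ∧
           (∃ C, Cct M✶ C ∧ C.ncard = t ∧ seg e i (t-1) ⊆ C)

/-!
Put `k = t - 1`, so that the windows are the segments `seg e i k`, and say that `x` completes a
window if adding `e x` turns it into a circuit. The engine is orthogonality: a circuit and a
cocircuit never meet in exactly one element. Hence if `x` completes window `i` in `M`, `y` completes
window `j` in `M✶`, the two windows are disjoint and `e x` lies in window `j`, then `e y` lies in
window `i`.

Suppose `p` completes window `i` and is at least `2k - 1` steps away from it on both sides. The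
elements completing in `M✶` the windows that start and end at `p` must be the two ends of window
`i`; this forces `p` to complete in `M✶` both windows that meet window `i` in just its first or its
last element. Whatever completes window `p` in `M` would lie in both of these disjoint windows.

For the remaining gaps take the largest gap `g ≥ 2` that occurs, in `M` or `M✶`, on either side.
Orthogonality propagates it from window `i` to window `i - 1`, hence to every window, and then some
circuit and some cocircuit share a single element. So windows are completed only by their
neighbours, and the circuits in question are segments of length `k + 1`. Since the same holds for
cocircuits, orthogonality makes these segments alternately circuits and non-circuits around the
cycle, which gives both uniqueness and the parity of `n`.
-/

theorem even_of_alternating {p : ℤ → Prop} {n : ℕ} (hp : ∀ i, p (i + 1) ↔ ¬ p i)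
    (hn : p n ↔ p 0) : Even n := by
  have hparity (m : ℕ) : (p m ↔ p 0) ↔ Even m := by
    induction m with
    | zero => simp
    | succ m ih =>
      rw [Nat.cast_succ, hp, Nat.even_add_one, ← ih]
      tauto
  exact (hparity n).1 hn

section Orthogonality

variable {M : Matroid α} {K X Y : Set α} {x y w : α}

theorem mem_of_isCircuit_insert_of_isCocircuit_insert (hX : M.IsCircuit (insert x X))
    (hY : M.IsCocircuit (insert y Y)) (hxY : x ∈ Y) (hXY : Disjoint X Y) : y ∈ X := by
  obtain ⟨z, ⟨hzX, hzY⟩, hzx⟩ := (hX.isCocircuit_inter_nontrivial hY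
    ⟨x, mem_insert x X, mem_insert_of_mem y hxY⟩).exists_ne x
  have hz : z ∈ X := hzX.resolve_left hzx
  obtain rfl : z = y := hzY.resolve_right (hXY.notMem_of_mem_left hz)
  exact hz

theorem mem_or_mem_or_eq_of_inter_eq_singleton (hX : M.IsCircuit (insert x X))
    (hY : M.IsCocircuit (insert y Y)) (hXY : X ∩ Y = {w}) : x ∈ Y ∨ y ∈ X ∨ x = y := by
  have hw : w ∈ X ∩ Y := hXY ▸ mem_singleton w
  obtain ⟨z, ⟨hzX, hzY⟩, hzw⟩ := (hX.isCocircuit_inter_nontrivial hY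
    ⟨w, mem_insert_of_mem x hw.1, mem_insert_of_mem y hw.2⟩).exists_ne w
  rcases hzX with rfl | hzX <;> rcases hzY with rfl | hzY
  · exact .inr (.inr rfl)
  · exact .inl hzY
  · exact .inr (.inl hzX)
  · exact absurd (hXY.subset ⟨hzX, hzY⟩) hzw

theorem mem_of_isCircuit_of_subset_insert_indep (hK : M.IsCircuit K) (hX : M.Indep X)
    (hKX : K ⊆ insert w X) : w ∈ K := by
  by_contra hw
  exact hK.not_indep (hX.subset ((subset_insert_iff_of_notMem hw).1 hKX))

end Orthogonality

section Segments

variable {n k : ℕ} {e : ZMod n → α} {i j a b : ℤ}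

theorem mem_seg {z : α} : z ∈ seg e i k ↔ ∃ a : ℤ, i ≤ a ∧ a < i + k ∧ e a = z := by
  constructor
  · rintro ⟨m, hm, rfl⟩
    rw [mem_Iio] at hm
    exact ⟨i + m, by omega, by omega, rfl⟩
  · rintro ⟨a, hia, hai, rfl⟩
    refine ⟨(a - i).toNat, by rw [mem_Iio]; omega, ?_⟩
    simp only [show i + ((a - i).toNat : ℤ) = a by omega]

theorem apply_mem_seg (hia : i ≤ a) (hai : a < i + k) : e a ∈ seg e i k :=
  mem_seg.2 ⟨a, hia, hai, rfl⟩

theorem finite_seg : (seg e i k).Finite :=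
  (finite_Iio k).image _

theorem seg_add_period : seg e (i + n) k = seg e i k := by
  simp [seg]

theorem seg_succ : seg e i (k + 1) = insert (e ((i + k : ℤ) : ZMod n)) (seg e i k) := by
  rw [seg, ← Order.succ_eq_add_one, Order.Iio_succ_eq_insert, image_insert_eq, ← seg]

theorem seg_succ' : seg e i (k + 1) = insert (e i) (seg e (i + 1) k) := by
  ext z
  simp only [mem_insert_iff, mem_seg]
  constructor
  · rintro ⟨a, hia, hai, rfl⟩
    obtain rfl | hne := eq_or_ne a i
    · exact .inl rfl
    · exact .inr ⟨a, by omega, by omega, rfl⟩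
  · rintro (rfl | ⟨a, hia, hai, rfl⟩)
    · exact ⟨i, by omega, by omega, rfl⟩
    · exact ⟨a, by omega, by omega, rfl⟩

theorem seg_comp_neg : seg (e ∘ Neg.neg) i k = seg e (1 - k - i) k := by
  ext z
  simp only [mem_seg]
  constructor <;>
  · rintro ⟨a, hia, hai, rfl⟩
    exact ⟨-a, by omega, by omega, by simp⟩

theorem eq_of_apply_intCast_eq (he : e.Injective) (h : e a = e b) (hab : a < b + n)
    (hba : b < a + n) : a = b := by
  have hdvd : (n : ℤ) ∣ b - a := (ZMod.intCast_eq_intCast_iff_dvd_sub a b n).1 (he h)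
  have := Int.eq_zero_of_abs_lt_dvd hdvd (abs_lt.2 ⟨by omega, by omega⟩)
  omega

theorem apply_mem_seg_iff (he : e.Injective) (hia : i + k ≤ a + n) (hai : a < i + n) :
    e a ∈ seg e i k ↔ i ≤ a ∧ a < i + k := by
  refine ⟨fun h ↦ ?_, fun h ↦ apply_mem_seg h.1 h.2⟩
  obtain ⟨b, hib, hbi, hba⟩ := mem_seg.1 h
  obtain rfl := eq_of_apply_intCast_eq he hba (by omega) (by omega)
  exact ⟨hib, hbi⟩

theorem disjoint_seg (he : e.Injective) (hij : i + k ≤ j) (hji : j + k ≤ i + n) :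
    Disjoint (seg e i k) (seg e j k) := by
  refine disjoint_left.2 fun z hi hj ↦ ?_
  obtain ⟨a, hia, hai, rfl⟩ := mem_seg.1 hi
  have := (apply_mem_seg_iff he (by omega) (by omega)).1 hj
  omega

theorem seg_inter_seg_eq_singleton (he : e.Injective) (hk : 1 ≤ k) (hkn : 2 * k - 1 ≤ n) :
    seg e i k ∩ seg e (i + k - 1) k = {e ((i + k - 1 : ℤ) : ZMod n)} := by
  refine Subset.antisymm ?_ (singleton_subset_iff.2
    ⟨apply_mem_seg (by omega) (by omega), apply_mem_seg (by omega) (by omega)⟩)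
  rintro z ⟨hzi, hzj⟩
  obtain ⟨a, hia, hai, rfl⟩ := mem_seg.1 hzi
  have := (apply_mem_seg_iff he (by omega) (by omega)).1 hzj
  rw [show a = i + k - 1 by omega]
  rfl

theorem ncard_seg (he : e.Injective) (hkn : k ≤ n) : (seg e i k).ncard = k := by
  have hinj : InjOn (fun m : ℕ ↦ e ((i + m : ℤ) : ZMod n)) (Iio k) := by
    intro a ha b hb hab
    rw [mem_Iio] at ha hb
    have := eq_of_apply_intCast_eq he hab (by omega) (by omega)
    omega
  rw [seg, hinj.ncard_image, ncard_eq_toFinset_card', toFinset_Iio, Nat.card_Iio]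

theorem exists_intCast_eq (hn : 0 < n) (c : ℤ) (z : ZMod n) :
    ∃ x : ℤ, c ≤ x ∧ x < c + n ∧ (x : ZMod n) = z := by
  obtain ⟨a, rfl⟩ := ZMod.intCast_surjective z
  have hnonneg := Int.emod_nonneg (a - c) (b := n) (by omega)
  have hlt := Int.emod_lt_of_pos (a - c) (b := n) (by omega)
  refine ⟨c + (a - c) % n, by omega, by omega, ?_⟩
  rw [Int.cast_add, ZMod.intCast_mod, ← Int.cast_add, add_sub_cancel]

end Segments

/-- The element `e x` extends the window `seg e i k` to a circuit of `M` with one more element.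
Positions are integers read modulo `n`, so that the places of windows and of completing elements
can be compared by inequalities in `ℤ`. -/
def Completes {n : ℕ} (M : Matroid α) (e : ZMod n → α) (k : ℕ) (i x : ℤ) : Prop :=
  e x ∉ seg e i k ∧ M.IsCircuit (insert (e x) (seg e i k))

section Completes

variable {n k : ℕ} {M : Matroid α} {e : ZMod n → α} {i j x y : ℤ}

theorem completes_add_period : Completes M e k i (x + n) ↔ Completes M e k i x := by
  simp [Completes]

theorem completes_comp_neg :
    Completes M (e ∘ Neg.neg) k i x ↔ Completes M e k (1 - k - i) (-x) := by
  simp [Completes, seg_comp_neg]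

theorem completes_comp_neg_gap {g : ℤ} :
    Completes M (e ∘ Neg.neg) k (1 - k - i) (1 - k - i + k - 1 + g) ↔
      Completes M e k i (i - g) := by
  rw [completes_comp_neg]
  ring_nf

theorem Completes.congr (hx : Completes M e k i x) (hxy : e x = e y) : Completes M e k i y := by
  rwa [Completes, ← hxy]

theorem Completes.indep_seg (hx : Completes M e k i x) : M.Indep (seg e i k) :=
  hx.2.ssubset_indep (ssubset_insert hx.1)

theorem Completes.apply_mem_seg (hx : Completes M e k i x) (hy : Completes M✶ e k j y)
    (hxj : e x ∈ seg e j k) (hij : Disjoint (seg e i k) (seg e j k)) : e y ∈ seg e i k :=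
  mem_of_isCircuit_insert_of_isCocircuit_insert hx.2 hy.2 hxj hij

theorem Completes.mem_Ico (hx : Completes M e k i x) (hy : Completes M✶ e k j y)
    (he : e.Injective) (hxj : j ≤ x ∧ x < j + k := by omega)
    (hij : i + k ≤ j ∧ j + k ≤ i + n ∨ j + k ≤ i ∧ i + k ≤ j + n := by omega)
    (hyi : i + k ≤ y + n ∧ y < i + n := by omega) : i ≤ y ∧ y < i + k := by
  have hdisj : Disjoint (seg e i k) (seg e j k) :=
    hij.elim (fun h ↦ disjoint_seg he h.1 h.2) (fun h ↦ (disjoint_seg he h.1 h.2).symm)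
  exact (apply_mem_seg_iff he hyi.1 hyi.2).1
    (hx.apply_mem_seg hy (CyclicArr.apply_mem_seg hxj.1 hxj.2) hdisj)

theorem Completes.mem_Ico_of_dual (hx : Completes M✶ e k i x) (hy : Completes M e k j y)
    (he : e.Injective) (hxj : j ≤ x ∧ x < j + k := by omega)
    (hij : i + k ≤ j ∧ j + k ≤ i + n ∨ j + k ≤ i ∧ i + k ≤ j + n := by omega)
    (hyi : i + k ≤ y + n ∧ y < i + n := by omega) : i ≤ y ∧ y < i + k :=
  hx.mem_Ico (by rwa [M.dual_dual]) he

theorem Completes.not_dual_completes_gap {g : ℤ} (hx : Completes M e k i (i + k - 1 + g))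
    (he : e.Injective) (hk : 1 ≤ k) (hg : 1 ≤ g) (hgn : 2 * g + 2 * k - 1 ≤ n) :
    ¬ Completes M✶ e k (i - k + 1) (i - k + 1 - g) := by
  intro hy
  have hinter := seg_inter_seg_eq_singleton (i := i - k + 1) he hk (by omega)
  rw [show i - k + 1 + k - 1 = i by ring, inter_comm] at hinter
  obtain h | h | h := mem_or_mem_or_eq_of_inter_eq_singleton hx.2 hy.2 hinter
  · have := (apply_mem_seg_iff he (by omega) (by omega)).1 h
    omega
  · have := (apply_mem_seg_iff he (by omega) (by omega)).1 h
    omega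
  · have := eq_of_apply_intCast_eq he h (by omega) (by omega)
    omega

theorem CyclicOrd.exists_completes_of_isCircuit {C : Set α} (he : CyclicOrd M e) (hkn : k < n)
    (c : ℤ) (hC : M.IsCircuit C) (hcard : C.ncard = k + 1) (hiC : seg e i k ⊆ C) :
    ∃ x, c ≤ x ∧ x < c + n ∧ Completes M e k i x ∧ insert (e x) (seg e i k) = C := by
  obtain ⟨z, hz, rfl⟩ := (exists_eq_insert_iff_ncard finite_seg).2
    ⟨hiC, by rw [ncard_seg he.1 hkn.le, hcard]⟩
  obtain ⟨r, rfl⟩ : z ∈ range e := he.2 ▸ hC.subset_ground (mem_insert z _)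
  obtain ⟨x, hcx, hxc, rfl⟩ := exists_intCast_eq (by omega) c r
  exact ⟨x, hcx, hxc, ⟨hz, hC⟩, rfl⟩

theorem not_isCocircuit_seg_of_isCircuit_seg (he : e.Injective) (hkn : 2 * k + 1 ≤ n)
    (hC : M.IsCircuit (seg e i (k + 1))) : ¬ M.IsCocircuit (seg e (i + k) (k + 1)) := by
  intro hD
  have hinter := seg_inter_seg_eq_singleton (i := i) he k.succ_pos (by omega)
  rw [show i + ((k + 1 : ℕ) : ℤ) - 1 = i + k by push_cast; ring] at hinter
  have hnontrivial := hC.isCocircuit_inter_nontrivial hD (hinter ▸ singleton_nonempty _)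
  exact not_nontrivial_singleton (hinter ▸ hnontrivial)

end Completes

namespace CyclicPropOrd

variable {n k t : ℕ} {M : Matroid α} {e : ZMod n → α} {C K : Set α} {g i l p q q' x : ℤ}

theorem dual (he : CyclicPropOrd M t e) : CyclicPropOrd M✶ t e :=
  ⟨he.1, fun i ↦ ⟨(he.2 i).2, by simpa only [Matroid.dual_dual] using (he.2 i).1⟩⟩

theorem comp_neg (he : CyclicPropOrd M t e) : CyclicPropOrd M t (e ∘ Neg.neg) := by
  refine ⟨⟨he.1.1.comp neg_injective, ?_⟩, fun i ↦ ?_⟩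
  · rw [neg_surjective.range_comp, he.1.2]
  · rw [seg_comp_neg]
    exact he.2 _

theorem exists_completes (he : CyclicPropOrd M (k + 1) e) (hkn : k < n) (i c : ℤ) :
    ∃ x, c ≤ x ∧ x < c + n ∧ Completes M e k i x := by
  obtain ⟨C, hC, hcard, hiC⟩ := (he.2 i).1
  obtain ⟨x, hcx, hxc, hx, -⟩ := he.1.exists_completes_of_isCircuit hkn c hC hcard hiC
  exact ⟨x, hcx, hxc, hx⟩

theorem exists_dual_completes (he : CyclicPropOrd M (k + 1) e) (hx : Completes M e k i x) (j : ℤ)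
    (hxj : j ≤ x ∧ x < j + k := by omega)
    (hij : i + k ≤ j ∧ j + k ≤ i + n ∨ j + k ≤ i ∧ i + k ≤ j + n := by omega) :
    ∃ y, i ≤ y ∧ y < i + k ∧ Completes M✶ e k j y := by
  obtain ⟨y, hiy, hyi, hy⟩ := he.dual.exists_completes (by omega) j i
  obtain ⟨hiy, hyi⟩ := hx.mem_Ico hy he.1.1
  exact ⟨y, hiy, hyi, hy⟩

theorem exists_completes_of_dual (he : CyclicPropOrd M (k + 1) e) (hx : Completes M✶ e k i x)
    (j : ℤ) (hxj : j ≤ x ∧ x < j + k := by omega)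
    (hij : i + k ≤ j ∧ j + k ≤ i + n ∨ j + k ≤ i ∧ i + k ≤ j + n := by omega) :
    ∃ y, i ≤ y ∧ y < i + k ∧ Completes M e k j y := by
  simpa only [Matroid.dual_dual] using he.dual.exists_dual_completes hx j

theorem apply_mem_seg_of_last_mem_isCircuit (he : CyclicPropOrd M (k + 1) e) (hk : 1 ≤ k)
    (hkn : 2 * k ≤ n) (hK : M.IsCircuit K) (hKi : K ⊆ seg e i (k + 1))
    (hlast : e ((i + k : ℤ) : ZMod n) ∈ K) (hx : Completes M e k i x) :
    e x ∈ seg e (i + k) k := by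
  obtain ⟨y, -, -, hy⟩ := he.dual.exists_completes (by omega) (i + k) 0
  have hdisj : Disjoint (seg e i k) (seg e (i + k) k) := disjoint_seg he.1.1 le_rfl (by omega)
  have hsub : K \ {e ((i + k : ℤ) : ZMod n)} ⊆ seg e i k := by
    rwa [sdiff_singleton_subset_iff, ← seg_succ]
  have hyi : e y ∈ seg e i k := hsub <| mem_of_isCircuit_insert_of_isCocircuit_insert
    (by rwa [insert_sdiff_self_of_mem hlast]) hy.2 (apply_mem_seg le_rfl (by omega))
    (hdisj.mono_left hsub)
  exact hy.apply_mem_seg (by rwa [M.dual_dual]) hyi hdisj.symm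

theorem apply_mem_seg_of_first_mem_isCircuit (he : CyclicPropOrd M (k + 1) e) (hk : 1 ≤ k)
    (hkn : 2 * k ≤ n) (hK : M.IsCircuit K) (hKi : K ⊆ seg e i (k + 1)) (hfirst : e i ∈ K)
    (hx : Completes M e k (i + 1) x) : e x ∈ seg e (i - k + 1) k := by
  have hK' : K ⊆ seg (e ∘ Neg.neg) (-i - k) (k + 1) := by
    rw [seg_comp_neg]
    convert hKi using 2
    push_cast
    ring
  have hfirst' : (e ∘ Neg.neg) ((-i - k + k : ℤ) : ZMod n) ∈ K := by simpa using hfirst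
  have hx' : Completes M (e ∘ Neg.neg) k (-i - k) (-x) := by
    rw [completes_comp_neg, neg_neg]
    convert hx using 1
    ring
  have hmem := he.comp_neg.apply_mem_seg_of_last_mem_isCircuit hk hkn hK hK' hfirst' hx'
  rw [seg_comp_neg, show (1 - k - (-i - k + k) : ℤ) = i - k + 1 by ring] at hmem
  simpa using hmem

/-- Circuit elimination on the two circuits leaves one inside `seg e i (k + 1)`, using both of its
ends; orthogonality then puts `e x` both right after and right before that segment. -/
theorem not_completes_succ (he : CyclicPropOrd M (k + 1) e) (hk : 1 ≤ k) (hkn : 3 * k - 1 ≤ n)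
    (hx : Completes M e k i x) : ¬ Completes M e k (i + 1) x := by
  intro hx'
  have hi : e i ∉ insert (e x) (seg e (i + 1) k) := by
    rintro (hix | hi)
    · exact hx.1 (hix ▸ apply_mem_seg le_rfl (by omega))
    · have := (apply_mem_seg_iff he.1.1 (by omega) (by omega)).1 hi
      omega
  have hne : insert (e x) (seg e i k) ≠ insert (e x) (seg e (i + 1) k) := fun h ↦
    hi (h ▸ mem_insert_of_mem _ (apply_mem_seg le_rfl (by omega)))
  obtain ⟨K, hKsub, hK⟩ := hx.2.elimination hx'.2 hne (e x)
  have hKi : K ⊆ seg e i (k + 1) := by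
    intro z hz
    obtain ⟨(hzx | hz) | (hzx | hz), hne⟩ := hKsub hz
    · exact absurd hzx hne
    · exact seg_succ ▸ mem_insert_of_mem _ hz
    · exact absurd hzx hne
    · exact seg_succ' ▸ mem_insert_of_mem _ hz
  have hlast := mem_of_isCircuit_of_subset_insert_indep hK hx.indep_seg (seg_succ ▸ hKi)
  have hfirst := mem_of_isCircuit_of_subset_insert_indep hK hx'.indep_seg (seg_succ' ▸ hKi)
  exact (disjoint_seg he.1.1 (by omega) (by omega)).notMem_of_mem_left
    (he.apply_mem_seg_of_first_mem_isCircuit hk (by omega) hK hKi hfirst hx')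
    (he.apply_mem_seg_of_last_mem_isCircuit hk (by omega) hK hKi hlast hx)

theorem eq_start_or_eq_start_of_completes_far (he : CyclicPropOrd M (k + 1) e)
    (hp : Completes M e k i p) (hip : i + 3 * k - 2 ≤ p) (hpi : p + 2 * k - 1 ≤ i + n)
    (hq : Completes M✶ e k p q) (hqi : i ≤ q ∧ q < i + k)
    (hq' : Completes M✶ e k (p - k + 1) q') (hqi' : i ≤ q' ∧ q' < i + k) :
    q = i ∨ q' = i := by
  by_contra! hne
  obtain ⟨x, hpx, hxp, hx⟩ := he.exists_completes_of_dual hq (i + 1)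
  have hxp' := hq'.mem_Ico_of_dual hx he.1.1
  obtain rfl : x = p := by omega
  exact he.not_completes_succ (by omega) (by omega) hp hx

theorem le_of_completes_far (he : CyclicPropOrd M (k + 1) e)
    (hp : Completes M e k i p) (hip : i + 3 * k - 2 ≤ p) (hpi : p + 2 * k - 1 ≤ i + n)
    (hx : Completes M e k l x) (hli : l ≤ i) (hil : i < l + k) (hix : i + k - 1 ≤ x)
    (hxp : x ≤ p) : p - k + 1 ≤ x := by
  obtain ⟨q, hiq, hqi, hq⟩ := he.exists_dual_completes hp p
  obtain ⟨q', hiq', hqi', hq'⟩ := he.exists_dual_completes hp (p - k + 1)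
  obtain rfl | rfl := he.eq_start_or_eq_start_of_completes_far hp hip hpi hq ⟨hiq, hqi⟩ hq'
    ⟨hiq', hqi'⟩
  · have := hq.mem_Ico_of_dual hx he.1.1
    omega
  · have := hq'.mem_Ico_of_dual hx he.1.1
    omega

theorem dual_completes_end_of_completes_far (he : CyclicPropOrd M (k + 1) e) (hk : 1 ≤ k)
    (hp : Completes M e k i p) (hip : i + 3 * k - 2 ≤ p) (hpi : p + 2 * k - 1 ≤ i + n) :
    Completes M✶ e k (i + k - 1) p := by
  obtain ⟨y, hiy, hyi, hy⟩ := he.dual.exists_completes (by omega) (i + k - 1) i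
  obtain hpj | hyi | hpy := mem_or_mem_or_eq_of_inter_eq_singleton hp.2 hy.2
    (seg_inter_seg_eq_singleton he.1.1 hk (by omega))
  · have := (apply_mem_seg_iff he.1.1 (by omega) (by omega)).1 hpj
    omega
  · have hyi := (apply_mem_seg_iff he.1.1 (by omega) (by omega)).1 hyi
    have hne : y ≠ i + k - 1 := by
      rintro rfl
      exact hy.1 (apply_mem_seg le_rfl (by omega))
    obtain ⟨x, hix, hxi, hx⟩ := he.exists_completes_of_dual hy (y - k + 1)
    have := he.le_of_completes_far hp hip hpi hx (by omega) (by omega) hix (by omega)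
    omega
  · exact hy.congr hpy.symm

theorem dual_completes_start_of_completes_far (he : CyclicPropOrd M (k + 1) e) (hk : 1 ≤ k)
    (hp : Completes M e k i p) (hip : i + 3 * k - 2 ≤ p) (hpi : p + 2 * k - 1 ≤ i + n) :
    Completes M✶ e k (i - k + 1) p := by
  have hp' : Completes M (e ∘ Neg.neg) k (1 - k - i) (-p + n) := by
    rwa [completes_add_period, completes_comp_neg, sub_sub_cancel, neg_neg]
  have hend := he.comp_neg.dual_completes_end_of_completes_far hk hp' (by omega) (by omega)
  rwa [completes_add_period, completes_comp_neg, neg_neg,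
    show (1 - k - (1 - k - i + k - 1) : ℤ) = i - k + 1 by ring] at hend

theorem not_completes_far (he : CyclicPropOrd M (k + 1) e) (hk : 2 ≤ k)
    (hip : i + 3 * k - 2 ≤ p) (hpi : p + 2 * k - 1 ≤ i + n) : ¬ Completes M e k i p := by
  intro hp
  have hend := he.dual_completes_end_of_completes_far (by omega) hp hip hpi
  have hstart := he.dual_completes_start_of_completes_far (by omega) hp hip hpi
  obtain ⟨x, hix, hxi, hx⟩ := he.exists_completes_of_dual hend p
  have := hstart.mem_Ico_of_dual hx he.1.1
  omega

theorem dual_completes_of_gap (he : CyclicPropOrd M (k + 1) e) (hk : 1 ≤ k) (hg : 1 ≤ g)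
    (hgn : g + 2 * k - 1 ≤ n)
    (hL : ∀ j g', g < g' → g' < g + k → ¬ Completes M✶ e k j (j - g'))
    (hp : Completes M e k i (i + k - 1 + g)) : Completes M✶ e k (i + k - 1 + g) (i + k - 1) := by
  obtain ⟨y, hiy, hyi, hy⟩ := he.exists_dual_completes hp (i + k - 1 + g)
  obtain rfl | hne := eq_or_ne y (i + k - 1)
  · exact hy
  · rw [← sub_sub_cancel (i + k - 1 + g) y] at hy
    exact absurd hy (hL _ _ (by omega) (by omega))

theorem completes_pred_of_gap (he : CyclicPropOrd M (k + 1) e) (hk : 2 ≤ k)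
    (hkn : 3 * k - 1 ≤ n) (hg : 2 ≤ g) (hgn : g + 2 * k - 1 ≤ n)
    (hR : ∀ j g', g < g' → g' < g + k → ¬ Completes M e k j (j + k - 1 + g'))
    (hL : ∀ j g', g < g' → g' < g + k → ¬ Completes M✶ e k j (j - g'))
    (hp : Completes M e k i (i + k - 1 + g)) :
    Completes M e k (i - 1) (i - 1 + k - 1 + g) := by
  have hdual := he.dual_completes_of_gap (by omega) (by omega) hgn hL hp
  obtain ⟨y, hiy, hyi, hy⟩ := he.exists_dual_completes hp (i + k - 2 + g)
  have hne : y ≠ i + k - 1 := by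
    rintro rfl
    refine he.dual.not_completes_succ (by omega) hkn hy ?_
    rwa [show i + k - 2 + g + 1 = i + k - 1 + g by ring]
  obtain rfl : y = i + k - 2 := by
    by_contra hne'
    rw [← sub_sub_cancel (i + k - 2 + g) y] at hy
    exact hL _ _ (by omega) (by omega) hy
  obtain ⟨x, hyx, hxy, hx⟩ := he.exists_completes_of_dual hy (i - 1)
  obtain rfl | hne' := eq_or_ne x (i - 1 + k - 1 + g)
  · exact hx
  · rw [← add_sub_cancel (i - 1 + k - 1) x] at hx
    exact absurd hx (hR _ _ (by omega) (by omega))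

theorem not_completes_gap (he : CyclicPropOrd M (k + 1) e) (hkn : 6 * k - 4 ≤ n) (hg : 2 ≤ g)
    (hgk : g ≤ 3 * k - 3) : ¬ Completes M e k i (i + k - 1 + g) := by
  have hk : 2 ≤ k := by omega
  induction hm : (3 * k - 3 - g).toNat using Nat.strong_induction_on generalizing M e g i with
  | _ m ih =>
  intro hp
  by_cases hfar : 2 * k - 1 ≤ g
  · exact he.not_completes_far hk (by omega) (by omega) hp
  have hR (j g' : ℤ) (hgg' : g < g') (hg'g : g' < g + k) :
      ¬ Completes M e k j (j + k - 1 + g') :=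
    ih (3 * k - 3 - g').toNat (by omega) he (by omega) (by omega) rfl
  have hL (j g' : ℤ) (hgg' : g < g') (hg'g : g' < g + k) : ¬ Completes M✶ e k j (j - g') := by
    rw [← completes_comp_neg_gap]
    exact ih (3 * k - 3 - g').toNat (by omega) he.dual.comp_neg (by omega) (by omega) rfl
  have hall (m : ℕ) : Completes M e k (i - m) (i - m + k - 1 + g) := by
    induction m with
    | zero => simpa using hp
    | succ m ihm =>
      rw [Nat.cast_succ, ← sub_sub]
      exact he.completes_pred_of_gap hk (by omega) hg (by omega) hR hL ihm
  have hdual := he.dual_completes_of_gap (by omega) (by omega) (by omega) hL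
    (hall (2 * k - 2 + g).toNat)
  rw [show i - (2 * k - 2 + g).toNat + k - 1 = i - k + 1 - g by omega, sub_add_cancel] at hdual
  exact hp.not_dual_completes_gap he.1.1 (by omega) (by omega) (by omega) hdual

theorem not_completes_gap_left (he : CyclicPropOrd M (k + 1) e) (hkn : 6 * k - 4 ≤ n) (hg : 2 ≤ g)
    (hgk : g ≤ 3 * k - 3) : ¬ Completes M e k i (i - g) := by
  rw [← completes_comp_neg_gap]
  exact he.comp_neg.not_completes_gap hkn hg hgk

theorem eq_or_eq_of_completes (he : CyclicPropOrd M (k + 1) e) (hk : 2 ≤ k)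
    (hkn : 6 * k - 4 ≤ n) (hx : Completes M e k i x) (hix : i ≤ x) (hxi : x < i + n) :
    x = i + k ∨ x = i - 1 + n := by
  have hkx : i + k ≤ x := by
    by_contra! hlt
    exact hx.1 (apply_mem_seg hix hlt)
  by_contra! hne
  by_cases hright : x ≤ i + 4 * k - 4
  · rw [← add_sub_cancel (i + k - 1) x] at hx
    exact he.not_completes_gap hkn (by omega) (by omega) hx
  by_cases hleft : i + n - 3 * k + 3 ≤ x
  · rw [← sub_add_cancel x n, completes_add_period, ← sub_sub_cancel i (x - n)] at hx
    exact he.not_completes_gap_left hkn (by omega) (by omega) hx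
  · exact he.not_completes_far hk (by omega) (by omega) hx

theorem eq_seg_or_eq_seg_of_isCircuit (he : CyclicPropOrd M (k + 1) e) (hk : 2 ≤ k)
    (hkn : 6 * k - 4 ≤ n) (hC : M.IsCircuit C) (hcard : C.ncard = k + 1) (hiC : seg e i k ⊆ C) :
    C = seg e i (k + 1) ∨ C = seg e (i - 1) (k + 1) := by
  obtain ⟨x, hix, hxi, hx, rfl⟩ := he.1.exists_completes_of_isCircuit (by omega) i hC hcard hiC
  obtain rfl | rfl := he.eq_or_eq_of_completes hk hkn hx hix hxi
  · exact .inl seg_succ.symm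
  · right
    rw [seg_succ', sub_add_cancel]
    simp

theorem isCircuit_seg_add_one_iff (he : CyclicPropOrd M (k + 1) e) (hk : 2 ≤ k)
    (hkn : 6 * k - 4 ≤ n) (i : ℤ) :
    M.IsCircuit (seg e (i + 1) (k + 1)) ↔ ¬ M.IsCircuit (seg e i (k + 1)) := by
  constructor
  · intro hsucc hi
    obtain ⟨D, hD, hcard, hsub⟩ := (he.2 (i + 1 + k)).2
    obtain rfl | rfl := he.dual.eq_seg_or_eq_seg_of_isCircuit hk hkn hD hcard hsub
    · exact not_isCocircuit_seg_of_isCircuit_seg he.1.1 (by omega) hsucc hD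
    · rw [show i + 1 + k - 1 = i + k by ring] at hD
      exact not_isCocircuit_seg_of_isCircuit_seg he.1.1 (by omega) hi hD
  · intro hi
    obtain ⟨C, hC, hcard, hsub⟩ := (he.2 (i + 1)).1
    obtain rfl | rfl := he.eq_seg_or_eq_seg_of_isCircuit hk hkn hC hcard hsub
    · exact hC
    · exact absurd (add_sub_cancel_right i 1 ▸ hC) hi

theorem existsUnique_isCircuit (he : CyclicPropOrd M (k + 1) e) (hk : 2 ≤ k)
    (hkn : 6 * k - 4 ≤ n) (i : ℤ) : ∃! C, M.IsCircuit C ∧ C.ncard = k + 1 ∧ seg e i k ⊆ C := by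
  have halt := he.isCircuit_seg_add_one_iff hk hkn (i - 1)
  rw [sub_add_cancel] at halt
  refine existsUnique_of_exists_of_unique (he.2 i).1 ?_
  rintro C D ⟨hC, hCcard, hiC⟩ ⟨hD, hDcard, hiD⟩
  obtain rfl | rfl := he.eq_seg_or_eq_seg_of_isCircuit hk hkn hC hCcard hiC <;>
    obtain rfl | rfl := he.eq_seg_or_eq_seg_of_isCircuit hk hkn hD hDcard hiD
  · rfl
  · exact absurd hD (halt.1 hC)
  · exact absurd hC (halt.1 hD)
  · rfl

theorem even (he : CyclicPropOrd M (k + 1) e) (hk : 2 ≤ k) (hkn : 6 * k - 4 ≤ n) : Even n := by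
  refine even_of_alternating (p := fun i ↦ M.IsCircuit (seg e i (k + 1)))
    (he.isCircuit_seg_add_one_iff hk hkn) ?_
  rw [← zero_add (n : ℤ), seg_add_period]

end CyclicPropOrd

/-- If `M` has a cyclic `(t-1,t)`-ordering with `t ≥ 3` and `n ≥ 6t-10`,
then `n` is even and every set `X_i` of `t-1` consecutive elements is contained in a
unique `t`-element circuit and a unique `t`-element cocircuit. -/
theorem statement_0 (M : Matroid α) (t n : ℕ) (ht : 3 ≤ t) (hn : 6 * t - 10 ≤ n)
    (e : ZMod n → α) (he : CyclicPropOrd M t e) :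
    Even n ∧ ∀ i : ℤ,
      (∃! C, Cct M C ∧ C.ncard = t ∧ seg e i (t - 1) ⊆ C) ∧
      (∃! C, Cct M✶ C ∧ C.ncard = t ∧ seg e i (t - 1) ⊆ C) := by
  obtain ⟨k, rfl⟩ : ∃ k, t = k + 1 := ⟨t - 1, by omega⟩
  have hk : 2 ≤ k := by omega
  have hkn : 6 * k - 4 ≤ n := by omega
  exact ⟨he.even hk hkn, fun i ↦
    ⟨he.existsUnique_isCircuit hk hkn i, he.dual.existsUnique_isCircuit hk hkn i⟩⟩

end CyclicArr
end

section
/- Let t ≥ 3 be an integer and let M be a matroid admitting a cyclic (t−1,t)-ordering e_1, e_2, …, e_n with n ≥ 4t−6. Then for every index i: every t-element circuit C of M containing X_i satisfies C ⊆ σ[i−(2t−4), i+3t−6], and every t-element cocircuit C* of M containing X_i satisfies C* ⊆ σ[i−(2t−4), i+3t−6]. -/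
open Set

namespace CyclicArr

variable {α : Type*}

/-!
Record a `t`-element circuit containing `X_m` as `X_m ∪ {e_{d m}}` and a `t`-element cocircuit
containing `X_k` as `X_k ∪ {e_{c k}}`; a circuit and a cocircuit never meet in exactly one element.
If the window `σ[i-(2t-4), i+3t-6]` is not everything and misses `j = d i`, cut the cycle open at
a point that leaves `j` to the right of `X_i`, so that all positions are integers.

Each `X_k` containing `j` is disjoint from `X_i`, hence `c k ∈ X_i`; in turn `d m ∈ X_k` for every
`m` near `i` with `c k ∈ X_m`. If no such `c k` were the first element `i` of `X_i`, this would
force `d (i+1) ∈ X_j ∩ X_{j-t+2} = {j}`, but `d` cannot take the value `j` at both `i` and `i+1`.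
So `c k = i` for some `k`, and symmetrically `c l = i+t-2` for some `l`. Then the circuits of
`X_{i-(t-2)}` and `X_{i+(t-2)}`, which meet `X_i` only in its end points, both have their extra
element equal to `c i`, and the second of them meets the cocircuit of `X_k` in that element alone.
-/

/-- Two sets are orthogonal if they do not meet in exactly one element, as is the case for a circuit
and a cocircuit of a matroid. With `Set.ncard` an infinite intersection counts as `0`, so it is
allowed. -/
def Orthogonal {β : Type*} (A B : Set β) : Prop := (A ∩ B).ncard ≠ 1

namespace Orthogonal

variable {β : Type*} {A B : Set β} {p x y : β}

theorem symm (h : Orthogonal A B) : Orthogonal B A := by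
  rwa [Orthogonal, inter_comm]

theorem exists_ne (h : Orthogonal A B) (hA : p ∈ A) (hB : p ∈ B) : ∃ q ∈ A ∩ B, q ≠ p := by
  by_contra! honly
  exact h (ncard_eq_one.2 ⟨p, eq_singleton_iff_unique_mem.2 ⟨⟨hA, hB⟩, honly⟩⟩)

theorem mem_of_disjoint (h : Orthogonal (insert x A) (insert y B)) (hAB : Disjoint A B)
    (hx : x ∈ insert y B) : y ∈ A := by
  obtain ⟨q, ⟨rfl | hqA, hqB⟩, hqx⟩ := h.exists_ne (mem_insert x A) hx
  · exact absurd rfl hqx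
  · exact hqB.resolve_right (hAB.notMem_of_mem_left hqA) ▸ hqA

theorem mem_insert_of_inter_eq_singleton (h : Orthogonal (insert x A) (insert y B))
    (hAB : A ∩ B = {p}) (hx : x ∉ B) : y ∈ insert x (A \ B) := by
  have hp : p ∈ A ∩ B := hAB ▸ mem_singleton p
  obtain ⟨q, ⟨hqA, hqB⟩, hqp⟩ := h.exists_ne (mem_insert_of_mem x hp.1) (mem_insert_of_mem y hp.2)
  have hq : q ∈ insert x (A \ B) := by
    refine hqA.imp_right fun hqA => ⟨hqA, fun hqB => hqp ?_⟩
    exact mem_singleton_iff.1 (hAB ▸ ⟨hqA, hqB⟩)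
  have hq_notMem : q ∉ B := by
    rcases hq with rfl | hq
    exacts [hx, hq.2]
  exact hqB.resolve_right hq_notMem ▸ hq

end Orthogonal

/-- The positions `m, …, m + t - 2` of the elements of `X_m`, on the unrolled cycle. -/
def block (t m : ℤ) : Set ℤ := Ico m (m + t - 1)

theorem mem_block {t m p : ℤ} : p ∈ block t m ↔ m ≤ p ∧ p < m + t - 1 := Iff.rfl

theorem disjoint_block {t m k : ℤ} (h : m + t - 1 ≤ k) : Disjoint (block t m) (block t k) :=
  disjoint_left.2 fun p hm hk => by rw [mem_block] at hm hk; omega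

theorem block_inter_block_eq_singleton {t m k : ℤ} (ht : 2 ≤ t) (hk : k = m + t - 2) :
    block t m ∩ block t k = {k} := by
  ext p
  rw [mem_inter_iff, mem_block, mem_block, mem_singleton_iff]
  omega

/-- The extensions `X_m ∪ {d m}` are orthogonal to the coextensions `X_k ∪ {c k}`, for all `m` and
`k` in `I`. They stand for the `t`-element circuits and cocircuits that contain blocks, with every
element replaced by its position. -/
def OrthogonalExtensions (t : ℤ) (I : Set ℤ) (d c : ℤ → ℤ) : Prop :=
  ∀ m ∈ I, ∀ k ∈ I, Orthogonal (insert (d m) (block t m)) (insert (c k) (block t k))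

namespace OrthogonalExtensions

variable {t i j k m : ℤ} {d c : ℤ → ℤ}

theorem coextension_mem_block (h : OrthogonalExtensions t (Icc (i + 2 - t) j) d c)
    (hij : i + 3 * t - 5 ≤ j) (hdi : d i = j) (hk : k ∈ Icc (j - t + 2) j) :
    c k ∈ block t i := by
  rw [mem_Icc] at hk
  refine (h i ⟨by omega, by omega⟩ k ⟨by omega, by omega⟩).mem_of_disjoint
    (disjoint_block (by omega)) (mem_insert_of_mem _ ?_)
  rw [hdi, mem_block]
  omega

theorem extension_mem_block (h : OrthogonalExtensions t (Icc (i + 2 - t) j) d c)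
    (hij : i + 3 * t - 5 ≤ j) (hk : k ∈ Icc (j - t + 2) j)
    (hm : m ∈ Icc (i + 2 - t) (i + t - 2)) (hck : c k ∈ block t m) : d m ∈ block t k := by
  rw [mem_Icc] at hk hm
  exact (h m ⟨by omega, by omega⟩ k ⟨by omega, by omega⟩).symm.mem_of_disjoint
    (disjoint_block (by omega)).symm (mem_insert_of_mem _ hck)

-- `X_{m+t-1}` meets `X_{m+1}` in one element and is disjoint from `X_m`, so its extension cannot be
-- orthogonal to both `X_{m+1} ∪ {j}` and `X_m ∪ {j}`.
theorem extension_succ_ne (h : OrthogonalExtensions t (Icc (i + 2 - t) j) d c) (ht : 2 ≤ t)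
    (hm : i + 2 - t ≤ m) (hmj : m + 2 * t - 2 ≤ j) (hdm : d m = j) : d (m + 1) ≠ j := by
  intro hdm'
  have hj : j ∉ block t (m + t - 1) := by rw [mem_block]; omega
  have horth := h (m + 1) ⟨by omega, by omega⟩ (m + t - 1) ⟨by omega, by omega⟩
  rw [hdm'] at horth
  have hinter : block t (m + 1) ∩ block t (m + t - 1) = {m + t - 1} :=
    block_inter_block_eq_singleton ht (by omega)
  have hc : c (m + t - 1) ∈ insert j (block t m) := by
    refine (horth.mem_insert_of_inter_eq_singleton hinter hj).imp_right fun hc => ?_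
    simp only [mem_sdiff, mem_block] at hc ⊢
    omega
  have horth' := (h m ⟨hm, by omega⟩ (m + t - 1) ⟨by omega, by omega⟩).symm
  rw [hdm] at horth'
  exact hj (horth'.mem_of_disjoint (disjoint_block le_rfl).symm hc)

theorem extension_eq_of_coextension_mem_block
    (h : OrthogonalExtensions t (Icc (i + 2 - t) j) d c) (hij : i + 3 * t - 5 ≤ j)
    (hm : m ∈ Icc (i + 2 - t) (i + t - 2)) (hc : ∀ k ∈ Icc (j - t + 2) j, c k ∈ block t m) :
    d m = j := by
  have hle := hm.1.trans hm.2
  have hlast : j ∈ Icc (j - t + 2) j := ⟨by omega, le_rfl⟩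
  have hfirst : j - t + 2 ∈ Icc (j - t + 2) j := ⟨le_rfl, by omega⟩
  have hd_last := h.extension_mem_block hij hlast hm (hc _ hlast)
  have hd_first := h.extension_mem_block hij hfirst hm (hc _ hfirst)
  rw [mem_block] at hd_last hd_first
  omega

theorem exists_coextension_eq_first (h : OrthogonalExtensions t (Icc (i + 2 - t) j) d c)
    (ht : 3 ≤ t) (hij : i + 3 * t - 5 ≤ j) (hdi : d i = j) :
    ∃ k ∈ Icc (j - t + 2) j, c k = i := by
  by_contra! hne
  refine h.extension_succ_ne (by omega) (m := i) (by omega) (by omega) hdi ?_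
  refine h.extension_eq_of_coextension_mem_block hij ⟨by omega, by omega⟩ fun k hk => ?_
  have hck := h.coextension_mem_block hij hdi hk
  have hck_ne := hne k hk
  rw [mem_block] at hck ⊢
  omega

theorem exists_coextension_eq_last (h : OrthogonalExtensions t (Icc (i + 2 - t) j) d c)
    (ht : 3 ≤ t) (hij : i + 3 * t - 5 ≤ j) (hdi : d i = j) :
    ∃ k ∈ Icc (j - t + 2) j, c k = i + t - 2 := by
  by_contra! hne
  refine h.extension_succ_ne (by omega) (m := i - 1) (by omega) (by omega) ?_
    (by rwa [sub_add_cancel])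
  refine h.extension_eq_of_coextension_mem_block hij ⟨by omega, by omega⟩ fun k hk => ?_
  have hck := h.coextension_mem_block hij hdi hk
  have hck_ne := hne k hk
  rw [mem_block] at hck ⊢
  omega

theorem extension_lt (h : OrthogonalExtensions t (Icc (i + 2 - t) (d i)) d c) (ht : 3 ≤ t) :
    d i < i + 3 * t - 5 := by
  by_contra! hij
  have ht2 : 2 ≤ t := by omega
  obtain ⟨k, hk, hck⟩ := h.exists_coextension_eq_first ht hij rfl
  obtain ⟨l, hl, hcl⟩ := h.exists_coextension_eq_last ht hij rfl
  have hd_left : d (i + 2 - t) ∈ block t k :=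
    h.extension_mem_block hij hk ⟨by omega, by omega⟩ (by rw [hck, mem_block]; omega)
  have hd_right : d (i + t - 2) ∈ block t l :=
    h.extension_mem_block hij hl ⟨by omega, by omega⟩ (by rw [hcl, mem_block]; omega)
  rw [mem_Icc] at hk hl
  rw [mem_block] at hd_left hd_right
  have hci_left : c i ∈ insert (d (i + 2 - t)) (block t (i + 2 - t) \ block t i) := by
    refine (h _ ⟨by omega, by omega⟩ i ⟨by omega, by omega⟩).mem_insert_of_inter_eq_singleton
      (block_inter_block_eq_singleton ht2 (by omega)) ?_
    rw [mem_block]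
    omega
  have hci_right : c i ∈ insert (d (i + t - 2)) (block t (i + t - 2) \ block t i) := by
    refine (h _ ⟨by omega, by omega⟩ i ⟨by omega, by omega⟩).mem_insert_of_inter_eq_singleton
      ((inter_comm _ _).trans (block_inter_block_eq_singleton ht2 rfl)) ?_
    rw [mem_block]
    omega
  have hd_eq : d (i + t - 2) = d (i + 2 - t) := by
    simp only [mem_insert_iff, mem_sdiff, mem_block] at hci_left hci_right
    omega
  have hck_mem : c k ∈ block t (i + t - 2) := by
    refine (h _ ⟨by omega, by omega⟩ k ⟨by omega, by omega⟩).mem_of_disjoint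
      (disjoint_block (by omega)) (mem_insert_of_mem _ ?_)
    rwa [hd_eq, mem_block]
  rw [hck, mem_block] at hck_mem
  omega

end OrthogonalExtensions

section Unrolling

variable {n : ℕ} {e : ZMod n → α}

theorem seg_eq_image_Ico (e : ZMod n → α) (i : ℤ) (len : ℕ) :
    seg e i len = (fun p : ℤ => e p) '' Ico i (i + len) := by
  ext x
  constructor
  · rintro ⟨k, hk, rfl⟩
    rw [mem_Iio] at hk
    exact ⟨i + k, ⟨by omega, by omega⟩, rfl⟩
  · rintro ⟨p, ⟨hip, hpi⟩, rfl⟩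
    refine ⟨(p - i).toNat, by rw [mem_Iio]; omega, ?_⟩
    simp only [Int.toNat_of_nonneg (sub_nonneg.2 hip), add_sub_cancel]

theorem seg_pred_eq_image_block {t : ℕ} (ht : 1 ≤ t) (e : ZMod n → α) (m : ℤ) :
    seg e m (t - 1) = (fun p : ℤ => e p) '' block t m := by
  rw [seg_eq_image_Ico, block, Nat.cast_sub ht, Nat.cast_one, add_sub_assoc]

theorem bijOn_Ico_range [NeZero n] (he : Function.Injective e) (a : ℤ) :
    BijOn (fun p : ℤ => e p) (Ico a (a + n)) (range e) := by
  refine ⟨fun p _ => mem_range_self _, fun p hp q hq hpq => ?_, ?_⟩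
  · have hdvd := (ZMod.intCast_eq_intCast_iff_dvd_sub p q n).1 (he hpq)
    rw [mem_Ico] at hp hq
    have := Int.eq_zero_of_abs_lt_dvd hdvd (abs_lt.2 ⟨by omega, by omega⟩)
    omega
  · rintro _ ⟨z, rfl⟩
    obtain ⟨p, rfl⟩ := ZMod.intCast_surjective z
    have hn : (0 : ℤ) < n := mod_cast NeZero.pos n
    exact ⟨toIcoMod hn a p, toIcoMod_mem_Ico hn a p, by simp [toIcoMod]⟩

theorem range_subset_seg [NeZero n] (he : Function.Injective e) {len : ℕ} (hn : n ≤ len) (i : ℤ) :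
    range e ⊆ seg e i len := by
  rw [seg_eq_image_Ico, ← (bijOn_Ico_range he i).image_eq]
  exact image_mono (Ico_subset_Ico_right (by omega))

/-- A choice, for every `m`, of a `t`-element set of terms of `e` that contains `X_m`. -/
def ExtendsBlocks (e : ZMod n → α) (t : ℕ) (A : ℤ → Set α) : Prop :=
  ∀ m, A m ⊆ range e ∧ (A m).ncard = t ∧ seg e m (t - 1) ⊆ A m

theorem ExtendsBlocks.exists_preimage_eq_insert [NeZero n] {t : ℕ} {A : ℤ → Set α}
    (hA : ExtendsBlocks e t A) (ht : 1 ≤ t) (he : Function.Injective e) {a m : ℤ}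
    (hm : block t m ⊆ Ico a (a + n)) :
    ∃ x, Ico a (a + n) ∩ (fun p : ℤ => e p) ⁻¹' A m = insert x (block t m) := by
  obtain ⟨hrange, hcard, hseg⟩ := hA m
  rw [seg_pred_eq_image_block ht, image_subset_iff] at hseg
  have hblock : (block t m).ncard + 1 = t := by
    rw [block, ← Finset.coe_Ico, ncard_coe_finset, Int.card_Ico]
    omega
  obtain ⟨x, -, hx⟩ := (exists_eq_insert_iff_ncard (finite_Ico _ _)).2
    ⟨subset_inter hm hseg, by
      rw [((bijOn_Ico_range he a).subset_right hrange).ncard_eq, hcard]; exact hblock⟩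
  exact ⟨x, hx.symm⟩

theorem Orthogonal.preimage [NeZero n] {A B : Set α} (h : Orthogonal A B) (hA : A ⊆ range e)
    (he : Function.Injective e) (a : ℤ) :
    Orthogonal (Ico a (a + n) ∩ (fun p : ℤ => e p) ⁻¹' A)
      (Ico a (a + n) ∩ (fun p : ℤ => e p) ⁻¹' B) := by
  have hbij := (bijOn_Ico_range he a).subset_right (inter_subset_left.trans hA : A ∩ B ⊆ range e)
  rwa [Orthogonal, ← inter_inter_distrib_left, ← preimage_inter, hbij.ncard_eq]

theorem ExtendsBlocks.subset_seg_of_orthogonal [NeZero n] {t : ℕ} {A B : ℤ → Set α}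
    (hA : ExtendsBlocks e t A) (hB : ExtendsBlocks e t B) (hAB : ∀ m k, Orthogonal (A m) (B k))
    (ht : 3 ≤ t) (he : Function.Injective e) (i : ℤ) :
    A i ⊆ seg e (i - (2 * (t : ℤ) - 4)) (5 * t - 9) := by
  obtain hn | hn := le_or_gt n (5 * t - 9)
  · exact (hA i).1.trans (range_subset_seg he hn _)
  set a : ℤ := i + 2 - t
  have hblock : ∀ m ∈ Icc a (a + n - t + 1), block t m ⊆ Ico a (a + n) := fun m hm =>
    Ico_subset_Ico hm.1 (by have := hm.2; omega)
  choose! d hd using fun m hm => hA.exists_preimage_eq_insert (by omega) he (hblock m hm)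
  choose! c hc using fun k hk => hB.exists_preimage_eq_insert (by omega) he (hblock k hk)
  have hi : i ∈ Icc a (a + n - t + 1) := ⟨by omega, by omega⟩
  have hdi : d i < i + 3 * t - 5 ∨ a + n - t + 1 < d i := by
    by_contra! hfar
    have hsub : Icc a (d i) ⊆ Icc a (a + n - t + 1) := Icc_subset_Icc_right hfar.2
    have horth : OrthogonalExtensions t (Icc a (d i)) d c := fun m hm k hk => by
      rw [← hd m (hsub hm), ← hc k (hsub hk)]
      exact (hAB m k).preimage (hA m).1 he a
    exact (horth.extension_lt (by omega)).not_ge hfar.1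
  intro x hx
  obtain ⟨p, hp, rfl⟩ := (bijOn_Ico_range he a).surjOn ((hA i).1 hx)
  have hp_mem : p ∈ insert (d i) (block t i) := hd i hi ▸ ⟨hp, hx⟩
  rw [mem_insert_iff, mem_block] at hp_mem
  rw [mem_Ico] at hp
  rw [seg_eq_image_Ico]
  obtain hp_lt | hp_ge := lt_or_ge p (i + 3 * t - 5)
  · exact ⟨p, ⟨by omega, by omega⟩, rfl⟩
  · exact ⟨p - n, ⟨by omega, by omega⟩, by simp⟩

end Unrolling

section Circuits

variable {M : Matroid α} {n t : ℕ} {e : ZMod n → α}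

theorem Cct.orthogonal {C K : Set α} (hC : Cct M C) (hK : Cct M✶ K) : Orthogonal C K := by
  intro hone
  obtain ⟨x, hx⟩ := ncard_eq_one.1 hone
  exact Matroid.IsCircuit.inter_isCocircuit_ne_singleton hC hK hx

theorem CyclicPropOrd.dual_s4 (he : CyclicPropOrd M t e) : CyclicPropOrd M✶ t e :=
  ⟨he.1, fun i => ⟨(he.2 i).2, by rw [M.dual_dual]; exact (he.2 i).1⟩⟩

theorem CyclicPropOrd.circuit_subset_seg [NeZero n] (he : CyclicPropOrd M t e) (ht : 3 ≤ t)
    {i : ℤ} {C : Set α} (hC : Cct M C) (hCt : C.ncard = t) (hiC : seg e i (t - 1) ⊆ C) :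
    C ⊆ seg e (i - (2 * (t : ℤ) - 4)) (5 * t - 9) := by
  obtain ⟨⟨hinj, hrange⟩, hext⟩ := he
  choose A hA using fun m => (hext m).1
  choose B hB using fun m => (hext m).2
  set A' := Function.update A i C with hA'_def
  have hA' : ∀ m, Cct M (A' m) ∧ (A' m).ncard = t ∧ seg e m (t - 1) ⊆ A' m :=
    (Function.forall_update_iff A fun m D => Cct M D ∧ D.ncard = t ∧ seg e m (t - 1) ⊆ D).2
      ⟨⟨hC, hCt, hiC⟩, fun m _ => hA m⟩
  have hA'_ext : ExtendsBlocks e t A' := fun m =>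
    ⟨hrange ▸ (hA' m).1.prop.subset_ground, (hA' m).2⟩
  have hB_ext : ExtendsBlocks e t B := fun m => ⟨hrange ▸ (hB m).1.prop.subset_ground, (hB m).2⟩
  have hsub := hA'_ext.subset_seg_of_orthogonal hB_ext
    (fun m k => (hA' m).1.orthogonal (hB k).1) ht hinj i
  rwa [hA'_def, Function.update_self] at hsub

theorem statement_4_general [NeZero n] (ht : 3 ≤ t) (he : CyclicPropOrd M t e) (i : ℤ) :
    (∀ C : Set α, Cct M C → C.ncard = t → seg e i (t - 1) ⊆ C →
      C ⊆ seg e (i - (2 * (t : ℤ) - 4)) (5 * t - 9)) ∧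
    (∀ C : Set α, Cct M✶ C → C.ncard = t → seg e i (t - 1) ⊆ C →
      C ⊆ seg e (i - (2 * (t : ℤ) - 4)) (5 * t - 9)) :=
  ⟨fun _ => he.circuit_subset_seg ht, fun _ => he.dual_s4.circuit_subset_seg ht⟩

end Circuits

/-- With `t ≥ 3` and `n ≥ 4t-6`, every `t`-element circuit or cocircuit
containing `X_i` is contained in `σ[i-(2t-4), i+3t-6]` (a window of `5t-9` consecutive
elements starting at position `i-(2t-4)`). -/
theorem statement_4 (M : Matroid α) (t n : ℕ) (ht : 3 ≤ t) (hn : 4 * t - 6 ≤ n)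
    (e : ZMod n → α) (he : CyclicPropOrd M t e) :
    ∀ i : ℤ,
      (∀ C : Set α, Cct M C → C.ncard = t → seg e i (t - 1) ⊆ C →
        C ⊆ seg e (i - (2 * (t : ℤ) - 4)) (5 * t - 9)) ∧
      (∀ C : Set α, Cct M✶ C → C.ncard = t → seg e i (t - 1) ⊆ C →
        C ⊆ seg e (i - (2 * (t : ℤ) - 4)) (5 * t - 9)) := by
  have : NeZero n := ⟨by omega⟩
  exact statement_4_general ht he

end CyclicArr
end

section
/- Let t ≥ 1 be an integer and let M be a t-cyclic matroid. Then |E(M)| ≥ 2t−2 and |E(M)| is even. -/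
open Set

namespace CyclicArr

variable {α : Type*}

/-- `M` has the cyclic `(t-1, t)`-property: it admits a cyclic `(t-1, t)`-ordering. -/
def HasCycProp (M : Matroid α) (t : ℕ) : Prop :=
  ∃ (n : ℕ) (e : ZMod n → α), CyclicPropOrd M t e

/-- `e` is an odd `t`-cyclic ordering of `M` (with `n ≥ t+1`): for all odd `i ∈ {1,…,n}`,
`{e_i, …, e_{i+t-1}}` is a `t`-element circuit and `{e_{i+1}, …, e_{i+t}}` is a
`t`-element cocircuit. -/
def OddTCycOrd {n : ℕ} (M : Matroid α) (t : ℕ) (e : ZMod n → α) : Prop :=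
  CyclicOrd M e ∧ t + 1 ≤ n ∧
  ∀ i : ℕ, Odd i → 1 ≤ i → i ≤ n →
    (Cct M (seg e (i : ℤ) t) ∧ (seg e (i : ℤ) t).ncard = t) ∧
    (Cct M✶ (seg e ((i : ℤ) + 1) t) ∧ (seg e ((i : ℤ) + 1) t).ncard = t)

/-- `e` is an even `t`-cyclic ordering of `M` (with `n ≥ t+1`): for all odd `i ∈ {1,…,n}`,
`{e_i, …, e_{i+t-1}}` is both a `t`-element circuit and a `t`-element cocircuit. -/
def EvenTCycOrd {n : ℕ} (M : Matroid α) (t : ℕ) (e : ZMod n → α) : Prop :=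
  CyclicOrd M e ∧ t + 1 ≤ n ∧
  ∀ i : ℕ, Odd i → 1 ≤ i → i ≤ n →
    Cct M (seg e (i : ℤ) t) ∧ Cct M✶ (seg e (i : ℤ) t) ∧ (seg e (i : ℤ) t).ncard = t

/-- `M` is `t`-cyclic: it admits an odd or even `t`-cyclic ordering. -/
def TCyclic (M : Matroid α) (t : ℕ) : Prop :=
  ∃ (n : ℕ) (e : ZMod n → α), OddTCycOrd M t e ∨ EvenTCycOrd M t e

/-- The rank of a set `X` in a matroid `M`: the maximum cardinality of an
independent subset of `X` (for a finite matroid). -/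
noncomputable def rkf (M : Matroid α) (X : Set α) : ℕ :=
  sSup {k | ∃ I, M.Indep I ∧ I ⊆ X ∧ I.ncard = k}

/-- The connectivity function `λ(X) = r(X) + r*(X) - |X|`, valued in `ℤ`. -/
noncomputable def lam (M : Matroid α) (X : Set α) : ℤ :=
  (rkf M X : ℤ) + (rkf M✶ X : ℤ) - (X.ncard : ℤ)

/-- The local connectivity `⊓(X, Y) = r(X) + r(Y) - r(X ∪ Y)`, valued in `ℤ`. -/
noncomputable def pic (M : Matroid α) (X Y : Set α) : ℤ :=
  (rkf M X : ℤ) + (rkf M Y : ℤ) - (rkf M (X ∪ Y) : ℤ)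

/-- `X` is exactly `k`-separating: `λ(X) = k - 1`. -/
noncomputable def ExactSep (M : Matroid α) (k : ℕ) (X : Set α) : Prop :=
  lam M X = (k : ℤ) - 1

/-- `(P_1, …, P_m)` is a concatenation of the cyclic ordering `e`, where `P i` is the
block of `l i` consecutive elements starting at position `a i`, and the blocks occur in
cyclic order and partition the ground set. -/
def IsConcat {n m : ℕ} (e : ZMod n → α) (P : ZMod m → Set α) (a l : ZMod m → ℕ) : Prop :=
  (∀ i, 1 ≤ l i) ∧
  (∀ i, ((a (i + 1) : ZMod n)) = ((a i + l i : ℕ) : ZMod n)) ∧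
  (∀ i, P i = seg e (a i : ℤ) (l i)) ∧
  Set.univ.PairwiseDisjoint P ∧
  (⋃ i, P i) = Set.range e

/-- `(P_1, …, P_m)` is a `k`-flower of `M`: a partition of the ground set into nonempty
sets, each exactly `k`-separating, with consecutive unions exactly `k`-separating. -/
noncomputable def IsFlower (M : Matroid α) (k : ℕ) {m : ℕ} (P : ZMod m → Set α) : Prop :=
  2 ≤ m ∧
  Set.univ.PairwiseDisjoint P ∧ (⋃ i, P i) = M.E ∧
  (∀ i, (P i).Nonempty) ∧
  (∀ i, ExactSep M k (P i)) ∧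
  (3 ≤ m → ∀ i, ExactSep M k (P i ∪ P (i + 1)))

/-- `I ⊆ ZMod m` is a set of consecutive members in the cyclic order. -/
def CycInterval {m : ℕ} (I : Set (ZMod m)) : Prop :=
  ∃ (a : ZMod m) (len : ℕ), 0 < len ∧ I = (fun k : ℕ => a + (k : ZMod m)) '' Set.Iio len

/-- A `k`-daisy: a `k`-flower in which the union of a proper nonempty collection of
petals is exactly `k`-separating precisely when the petals are consecutive. -/
noncomputable def IsDaisy (M : Matroid α) (k : ℕ) {m : ℕ} (P : ZMod m → Set α) : Prop :=
  IsFlower M k P ∧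
  ∀ I : Set (ZMod m), I.Nonempty → I ≠ Set.univ →
    (ExactSep M k (⋃ i ∈ I, P i) ↔ CycInterval I)

/-- A `k`-anemone: a `k`-flower in which the union of every proper nonempty collection
of petals is exactly `k`-separating. -/
noncomputable def IsAnemone (M : Matroid α) (k : ℕ) {m : ℕ} (P : ZMod m → Set α) : Prop :=
  IsFlower M k P ∧
  ∀ I : Set (ZMod m), I.Nonempty → I ≠ Set.univ → ExactSep M k (⋃ i ∈ I, P i)

/-!
A circuit has rank `|C| - 1` and a cocircuit `K` has corank `|K| - 1`, so `r(M) + r*(M) = |E(M)|`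
bounds `|C| + |K|` by `|E(M)| + 2`. With `|C| = |K| = t` this is the lower bound on `|E(M)|`.

If `n = |E(M)|` were odd, then `n ≥ 2t - 1`, so a segment of length `t` meets the segment of
length `t` starting at its last element in that element alone. Since `n` is odd, every residue
modulo `n` is a difference of two odd numbers in `{1, …, n}`; hence some circuit segment and some
cocircuit segment are in this position, contradicting orthogonality of circuits and cocircuits.
-/

theorem encard_add_encard_le_of_isCircuit_of_isCocircuit {M : Matroid α} {C K : Set α}
    (hC : M.IsCircuit C) (hK : M.IsCocircuit K) : C.encard + K.encard ≤ M.E.encard + 2 :=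
  calc C.encard + K.encard
    _ = (M.eRk C + 1) + (M✶.eRk K + 1) := by rw [hC.eRk_add_one_eq, hK.eRk_add_one_eq]
    _ ≤ (M.eRank + 1) + (M✶.eRank + 1) := by
        gcongr
        exacts [M.eRk_le_eRank C, M✶.eRk_le_eRank K]
    _ = M.E.encard + 2 := by
        rw [add_add_add_comm, M.eRank_add_eRank_dual, one_add_one_eq_two]

theorem exists_odd_natCast_eq_odd_natCast_add {n : ℕ} (hn : Odd n) (x : ZMod n) :
    ∃ i j : ℕ, (Odd i ∧ i ≤ n) ∧ (Odd j ∧ j ≤ n) ∧ (i : ZMod n) = j + x := by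
  have : NeZero n := ⟨hn.pos.ne'⟩
  have hx : x.val < n := x.val_lt
  rcases Nat.even_or_odd x.val with heven | hodd
  · refine ⟨x.val + 1, 1, ⟨heven.add_one, hx⟩, ⟨odd_one, hn.pos⟩, ?_⟩
    rw [Nat.cast_add, ZMod.natCast_zmod_val, add_comm]
  · refine ⟨1, n - x.val + 1, ⟨odd_one, hn.pos⟩, ⟨(Nat.Odd.sub_odd hn hodd).add_one, ?_⟩, ?_⟩
    · have := hodd.pos
      lia
    · rw [Nat.cast_add, Nat.cast_sub hx.le, ZMod.natCast_self, ZMod.natCast_zmod_val]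
      ring

section Segments

variable {n : ℕ} {e : ZMod n → α}

theorem injOn_Iio_of_injective (he : Function.Injective e) (i : ℤ) :
    InjOn (fun k : ℕ => e ((i + k : ℤ) : ZMod n)) (Iio n) := by
  intro k hk l hl hkl
  have hcast : (k : ZMod n) = l := by simpa using he hkl
  exact CharP.natCast_injOn_Iio (ZMod n) n hk hl hcast

theorem encard_seg (he : Function.Injective e) (i : ℤ) {len : ℕ} (hlen : len ≤ n) :
    (seg e i len).encard = len := by
  rw [seg, ((injOn_Iio_of_injective he i).mono (Iio_subset_Iio hlen)).encard_image,
    ← (finite_Iio len).cast_ncard_eq, ncard_Iio_nat]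

theorem seg_congr {i j : ℤ} (hij : (i : ZMod n) = j) (len : ℕ) : seg e i len = seg e j len := by
  simp only [seg, Int.cast_add, hij]

theorem seg_add_eq_image_Ico (i : ℤ) (a len : ℕ) :
    seg e (i + a) len = (fun k : ℕ => e ((i + k : ℤ) : ZMod n)) '' Ico a (a + len) := by
  have hshift : Ico a (a + len) = (a + ·) '' Iio len := by
    rw [← Ico_bot, bot_eq_zero, image_const_add_Ico, add_zero]
  rw [hshift, image_image]
  simp only [seg, Nat.cast_add, add_assoc]

theorem seg_inter_seg_add_eq_singleton (he : Function.Injective e) (i : ℤ) {a b : ℕ}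
    (hab : a + b < n) :
    seg e i (a + 1) ∩ seg e (i + a) (b + 1) = {e ((i + a : ℤ) : ZMod n)} := by
  have hmeet : Iio (a + 1) ∩ Ico a (a + (b + 1)) = {a} := by
    ext k
    simp only [mem_inter_iff, mem_Iio, mem_Ico, mem_singleton_iff]
    lia
  have hleft : Iio (a + 1) ⊆ Iio n := Iio_subset_Iio (by lia)
  have hright : Ico a (a + (b + 1)) ⊆ Iio n := Ico_subset_Iio_self.trans (Iio_subset_Iio hab)
  rw [seg_add_eq_image_Ico, seg, ← (injOn_Iio_of_injective he i).image_inter hleft hright,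
    hmeet, image_singleton]

theorem CyclicOrd.encard_ground [NeZero n] {M : Matroid α} (he : CyclicOrd M e) :
    M.E.encard = n := by
  rw [← he.2, ← image_univ, he.1.encard_image, encard_univ, ENat.card_eq_coe_natCard,
    Nat.card_zmod]

end Segments

/-- The common form of odd and even `t`-cyclic orderings, which are the cases `s = 1` and `s = 0`:
at each odd `i ∈ {1, …, n}` there starts a circuit of `t` consecutive elements, and `s` places
further on a cocircuit of `t` consecutive elements. That these sets have exactly `t` elements
follows from `t < n`. -/
structure OffsetTCycOrd {n : ℕ} (M : Matroid α) (t : ℕ) (s : ℤ) (e : ZMod n → α) : Prop where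
  cyclicOrd : CyclicOrd M e
  lt : t < n
  isCircuit : ∀ i : ℕ, Odd i → i ≤ n → M.IsCircuit (seg e i t)
  isCocircuit : ∀ i : ℕ, Odd i → i ≤ n → M.IsCocircuit (seg e (i + s) t)

section Orderings

variable {n t : ℕ} {s : ℤ} {M : Matroid α} {e : ZMod n → α}

theorem OddTCycOrd.offsetTCycOrd (h : OddTCycOrd M t e) : OffsetTCycOrd M t 1 e where
  cyclicOrd := h.1
  lt := h.2.1
  isCircuit i hi hin := (h.2.2 i hi hi.pos hin).1.1
  isCocircuit i hi hin := (h.2.2 i hi hi.pos hin).2.1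

theorem EvenTCycOrd.offsetTCycOrd (h : EvenTCycOrd M t e) : OffsetTCycOrd M t 0 e where
  cyclicOrd := h.1
  lt := h.2.1
  isCircuit i hi hin := (h.2.2 i hi hi.pos hin).1
  isCocircuit i hi hin := (add_zero (i : ℤ)).symm ▸ (h.2.2 i hi hi.pos hin).2.1

theorem TCyclic.exists_offsetTCycOrd (h : TCyclic M t) :
    ∃ (n : ℕ) (s : ℤ) (e : ZMod n → α), OffsetTCycOrd M t s e := by
  obtain ⟨n, e, hodd | heven⟩ := h
  exacts [⟨n, 1, e, hodd.offsetTCycOrd⟩, ⟨n, 0, e, heven.offsetTCycOrd⟩]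

namespace OffsetTCycOrd

theorem encard_ground (h : OffsetTCycOrd M t s e) : M.E.encard = n :=
  have : NeZero n := ⟨h.lt.ne_bot⟩
  h.cyclicOrd.encard_ground

theorem pos (h : OffsetTCycOrd M t s e) : 0 < t := by
  obtain ⟨-, k, hk, -⟩ := (h.isCircuit 1 odd_one h.lt.pos).nonempty
  exact pos_of_gt hk

theorem two_mul_le_add_two (h : OffsetTCycOrd M t s e) : 2 * t ≤ n + 2 := by
  have hsum := encard_add_encard_le_of_isCircuit_of_isCocircuit
    (h.isCircuit 1 odd_one h.lt.pos) (h.isCocircuit 1 odd_one h.lt.pos)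
  rw [encard_seg h.cyclicOrd.1 _ h.lt.le, encard_seg h.cyclicOrd.1 _ h.lt.le,
    h.encard_ground] at hsum
  rw [two_mul]
  exact_mod_cast hsum

theorem even (h : OffsetTCycOrd M t s e) : Even n := by
  by_contra hn
  rw [Nat.not_even_iff_odd] at hn
  obtain ⟨a, rfl⟩ := Nat.exists_eq_add_one_of_ne_zero h.pos.ne'
  obtain ⟨i, j, ⟨hi, hin⟩, ⟨hj, hjn⟩, hij⟩ :=
    exists_odd_natCast_eq_odd_natCast_add hn ((s : ZMod n) - a)
  have hstart : ((j + s : ℤ) : ZMod n) = ((i + a : ℤ) : ZMod n) := by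
    push_cast
    rw [hij]
    ring
  have hK : M.IsCocircuit (seg e (i + a) (a + 1)) :=
    seg_congr hstart (a + 1) ▸ h.isCocircuit j hj hjn
  have hlt : a + a < n := by
    have := h.two_mul_le_add_two
    obtain ⟨m, rfl⟩ := hn
    lia
  exact (h.isCircuit i hi hin).inter_isCocircuit_ne_singleton hK
    (seg_inter_seg_add_eq_singleton h.cyclicOrd.1 i hlt)

end OffsetTCycOrd

theorem statement_8_general (h : OffsetTCycOrd M t s e) :
    2 * t - 2 ≤ M.E.ncard ∧ Even M.E.ncard := by
  have hcard : M.E.ncard = n := by rw [ncard, h.encard_ground, ENat.toNat_natCast]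
  rw [hcard]
  exact ⟨Nat.sub_le_of_le_add h.two_mul_le_add_two, h.even⟩

end Orderings

/-- If `t ≥ 1` and `M` is a `t`-cyclic matroid, then `|E(M)| ≥ 2t - 2`
and `|E(M)|` is even. -/
theorem statement_8 (M : Matroid α) (t : ℕ) (ht : 1 ≤ t) (h : TCyclic M t) :
    2 * t - 2 ≤ M.E.ncard ∧ Even M.E.ncard := by
  obtain ⟨n, s, e, he⟩ := h.exists_offsetTCycOrd
  exact statement_8_general he

end CyclicArr
end
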